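/- The functional J̃ : F × [0,∞) → ℝ, J̃(f,c) = (1/2)c³I₁(f) - (1/2)c²gA·I₂(f), with I₁(f) = ∫₀¹ F(y)²/(1-f(y)²) dy, I₂(f) = ∫₀¹ (1-f(y))y dy, F(y) = ∫_{-1}^y f'(s)s ds, has a unique global minimum at (f, c) = (id, (2/3)gA), where the minimal value is -g³A³/81. -/

import Mathlib

/-!
Put `a = g A`, `w = 1 - f²` and, for `c > 0`, `t = 2a / (3c)`. Then
`J̃(f, c) = c³/2 · (I₁ - (3/2) t I₂)`, so the claim reads `I₁ - (3/2) t I₂ ≥ -t³/12`, with equality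
only for `t = 1` and `f = id`. Two elementary inequalities give it.

* Oddness yields `F(1) = 0` and, after integrating by parts, `∫₀¹ F = -2 I₂`. Integrating
  `(F + (t/2) w)² / w ≥ 0` then gives `I₁ ≥ 2 t I₂ - (t²/4) ∫₀¹ w`.
* What remains is `(t/2) ∫₀¹ ((1 - f) y - (t/2) (1 - f²))`, whose integrand is minimal among values
  `f y ≤ 1` exactly at `f y = min (y/t) 1`, with minimum `-(t - y)₊² / (2t)`.

The minimizer `min (y/t) 1` is admissible only for `t = 1`.
-/

open Filter MeasureTheory Set Topology intervalIntegral

section PointwiseMinimization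

variable {t y u : ℝ}

lemma sub_mul_sub_half_mul_one_sub_sq (ht : t ≠ 0) (y u : ℝ) :
    (1 - u) * y - t / 2 * (1 - u ^ 2) = -(t - y) ^ 2 / (2 * t) + t / 2 * (u - y / t) ^ 2 := by
  field_simp
  ring

lemma neg_sq_max_div_le (ht : 0 < t) (hu : u ≤ 1) :
    -max (t - y) 0 ^ 2 / (2 * t) ≤ (1 - u) * y - t / 2 * (1 - u ^ 2) := by
  rcases le_total y t with hyt | hty
  · rw [max_eq_left (sub_nonneg.2 hyt), sub_mul_sub_half_mul_one_sub_sq ht.ne']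
    exact le_add_of_nonneg_right (by positivity)
  · have factor : (1 - u) * y - t / 2 * (1 - u ^ 2) = (1 - u) * (y - t + t / 2 * (1 - u)) := by ring
    rw [max_eq_right (sub_nonpos.2 hty), factor]
    have := sub_nonneg.2 hu
    have := sub_nonneg.2 hty
    rw [zero_pow two_ne_zero, neg_zero, zero_div]
    positivity

lemma eq_min_div_of_eq_neg_sq_max_div (ht : 0 < t) (hu : u ≤ 1)
    (h : -max (t - y) 0 ^ 2 / (2 * t) = (1 - u) * y - t / 2 * (1 - u ^ 2)) :
    u = min (y / t) 1 := by
  rcases le_or_gt y t with hyt | hty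
  · rw [max_eq_left (sub_nonneg.2 hyt), sub_mul_sub_half_mul_one_sub_sq ht.ne', left_eq_add] at h
    rw [min_eq_left ((div_le_one ht).2 hyt), ← sub_eq_zero]
    simpa [ht.ne'] using h
  · rw [min_eq_right ((one_le_div ht).2 hty.le)]
    rw [max_eq_right (sub_nonpos.2 hty.le)] at h
    have factor : (1 - u) * (y - t + t / 2 * (1 - u)) = 0 := by linear_combination -h
    have pos : 0 < y - t + t / 2 * (1 - u) := by
      have := sub_nonneg.2 hu
      have := sub_pos.2 hty
      positivity
    linarith [(mul_eq_zero.1 factor).resolve_right pos.ne']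

end PointwiseMinimization

section IntegralMinimization

variable {t b : ℝ} {f : ℝ → ℝ}

lemma integral_sq_max_sub_le (ht : 0 ≤ t) (hb : 0 ≤ b) :
    ∫ y in (0 : ℝ)..b, max (t - y) 0 ^ 2 ≤ t ^ 3 / 3 := by
  have integrable (p q : ℝ) : IntervalIntegrable (fun y ↦ max (t - y) 0 ^ 2) volume p q :=
    Continuous.intervalIntegrable (by fun_prop) p q
  have below : ∫ y in (0 : ℝ)..t, max (t - y) 0 ^ 2 = t ^ 3 / 3 := by
    calc ∫ y in (0 : ℝ)..t, max (t - y) 0 ^ 2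
      _ = ∫ y in (0 : ℝ)..t, (t - y) ^ 2 := integral_congr fun y hy ↦ by
          rw [uIcc_of_le ht] at hy
          simp only [max_eq_left (sub_nonneg.2 hy.2)]
      _ = t ^ 3 / 3 := by
          rw [integral_comp_sub_left fun x ↦ x ^ 2, integral_pow]
          norm_num
  have above : ∫ y in t..max b t, max (t - y) 0 ^ 2 = 0 := by
    refine integral_zero_ae (.of_forall fun y hy ↦ ?_)
    rw [uIoc_of_le (le_max_right b t)] at hy
    rw [max_eq_right (sub_nonpos.2 hy.1.le), zero_pow two_ne_zero]
  calc ∫ y in (0 : ℝ)..b, max (t - y) 0 ^ 2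
    _ ≤ ∫ y in (0 : ℝ)..max b t, max (t - y) 0 ^ 2 :=
        integral_mono_interval le_rfl hb (le_max_left b t) (.of_forall fun _ ↦ sq_nonneg _)
          (integrable _ _)
    _ = t ^ 3 / 3 := by
        rw [← integral_add_adjacent_intervals (integrable 0 t) (integrable t _), below, above,
          add_zero]

lemma neg_sq_div_six_le_integral_neg_sq_max_div (ht : 0 < t) (hb : 0 ≤ b) :
    -t ^ 2 / 6 ≤ ∫ y in (0 : ℝ)..b, -max (t - y) 0 ^ 2 / (2 * t) := by
  rw [intervalIntegral.integral_div, intervalIntegral.integral_neg, le_div_iff₀ (by positivity)]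
  linarith [integral_sq_max_sub_le ht.le hb]

lemma neg_sq_div_six_le_integral (ht : 0 < t) (hb : 0 ≤ b) (hf : ContinuousOn f (Icc 0 b))
    (hf_le : ∀ y ∈ Icc 0 b, f y ≤ 1) :
    -t ^ 2 / 6 ≤ ∫ y in (0 : ℝ)..b, ((1 - f y) * y - t / 2 * (1 - f y ^ 2)) :=
  (neg_sq_div_six_le_integral_neg_sq_max_div ht hb).trans <|
    integral_mono_on hb (Continuous.intervalIntegrable (by fun_prop) _ _)
      (ContinuousOn.intervalIntegrable_of_Icc hb (by fun_prop))
      fun y hy ↦ neg_sq_max_div_le ht (hf_le y hy)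

lemma eq_min_div_of_integral_eq (ht : 0 < t) (hb : 0 < b) (hf : ContinuousOn f (Icc 0 b))
    (hf_le : ∀ y ∈ Icc 0 b, f y ≤ 1)
    (h : ∫ y in (0 : ℝ)..b, ((1 - f y) * y - t / 2 * (1 - f y ^ 2)) = -t ^ 2 / 6) :
    ∀ y ∈ Icc 0 b, f y = min (y / t) 1 := by
  intro y hy
  refine eq_min_div_of_eq_neg_sq_max_div ht (hf_le y hy) ?_
  by_contra hne
  have lt := integral_lt_integral_of_continuousOn_of_le_of_exists_lt hb
    (f := fun y ↦ -max (t - y) 0 ^ 2 / (2 * t))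
    (g := fun y ↦ (1 - f y) * y - t / 2 * (1 - f y ^ 2)) (by fun_prop) (by fun_prop)
    (fun x hx ↦ neg_sq_max_div_le ht (hf_le x (Ioc_subset_Icc_self hx)))
    ⟨y, hy, (neg_sq_max_div_le ht (hf_le y hy)).lt_of_ne hne⟩
  exact (neg_sq_div_six_le_integral_neg_sq_max_div ht hb.le).not_gt (h ▸ lt)

end IntegralMinimization

section Calculus

lemma hasDerivWithinAt_integral_of_continuousOn_Icc {E : Type*} [NormedAddCommGroup E]
    [NormedSpace ℝ E] [CompleteSpace E] {φ : ℝ → E} {a b y : ℝ} (hφ : ContinuousOn φ (Icc a b))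
    (hy : y ∈ Icc a b) :
    HasDerivWithinAt (fun x ↦ ∫ s in a..x, φ s) (φ y) (Icc a b) y := by
  have : Fact (y ∈ Icc a b) := ⟨hy⟩
  exact integral_hasDerivWithinAt_right
    ((hφ.mono (Icc_subset_Icc_right hy.2)).intervalIntegrable_of_Icc hy.1)
    (hφ.stronglyMeasurableAtFilter_nhdsWithin measurableSet_Icc y) (hφ y hy)

/-- The junk value `0 / 0 = 0` at `x` agrees with the limit of the quotient. -/
lemma continuousWithinAt_sq_div_of_hasDerivWithinAt {𝕜 : Type*} [NontriviallyNormedField 𝕜]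
    {u v : 𝕜 → 𝕜} {u' v' x : 𝕜} {s : Set 𝕜} (hu : HasDerivWithinAt u u' s x)
    (hv : HasDerivWithinAt v v' s x) (hux : u x = 0) (hvx : v x = 0) (hv' : v' ≠ 0) :
    ContinuousWithinAt (fun y ↦ u y ^ 2 / v y) s x := by
  have slopes : Tendsto (fun y ↦ slope u x y ^ 2 * (y - x) / slope v x y) (𝓝[s \ {x}] x) (𝓝 0) := by
    have id_sub : Tendsto (fun y ↦ y - x) (𝓝[s \ {x}] x) (𝓝 0) :=
      tendsto_nhdsWithin_of_tendsto_nhds <| by simpa using (continuous_sub_right x).tendsto x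
    have quotient := (((hasDerivWithinAt_iff_tendsto_slope.1 hu).pow 2).mul id_sub).div
      (hasDerivWithinAt_iff_tendsto_slope.1 hv) hv'
    rwa [mul_zero, zero_div] at quotient
  rw [← continuousWithinAt_sdiff_self, ContinuousWithinAt, hux, hvx, div_zero]
  refine slopes.congr' ?_
  filter_upwards [self_mem_nhdsWithin] with y hy
  have hyx : y - x ≠ 0 := sub_ne_zero.2 hy.2
  simp only [slope_def_field, hux, hvx, sub_zero]
  field_simp

lemma two_mul_integral_sub_integral_le_integral_sq_div {F w : ℝ → ℝ} {a b : ℝ} {μ : Measure ℝ}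
    [NullSingletonClass μ] (hab : a ≤ b) (hw_pos : ∀ y ∈ Ioo a b, 0 < w y)
    (hF : IntervalIntegrable F μ a b) (hw : IntervalIntegrable w μ a b)
    (hFw : IntervalIntegrable (fun y ↦ F y ^ 2 / w y) μ a b) (r : ℝ) :
    2 * r * (∫ y in a..b, F y ∂μ) - r ^ 2 * ∫ y in a..b, w y ∂μ ≤
      ∫ y in a..b, F y ^ 2 / w y ∂μ := by
  rw [← intervalIntegral.integral_const_mul, ← intervalIntegral.integral_const_mul,
    ← integral_sub (hF.const_mul _) (hw.const_mul _)]
  refine integral_mono_on_of_le_Ioo hab ((hF.const_mul _).sub (hw.const_mul _)) hFw fun y hy ↦ ?_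
  rw [le_div_iff₀ (hw_pos y hy)]
  linarith [sq_nonneg (F y - r * w y)]

lemma integral_eq_zero_of_odd {E : Type*} [NormedAddCommGroup E] [NormedSpace ℝ E] {f : ℝ → E}
    {b : ℝ} (hb : 0 ≤ b) (hf : ∀ y ∈ Icc (-b) b, f (-y) = -f y) : ∫ y in -b..b, f y = 0 := by
  have reflect : ∫ y in -b..b, f y = -∫ y in -b..b, f y := by
    calc ∫ y in -b..b, f y
      _ = ∫ y in -b..b, f (-y) := by rw [integral_comp_neg, neg_neg]
      _ = ∫ y in -b..b, -f y := integral_congr fun y hy ↦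
          hf y (by rwa [uIcc_of_le (neg_le_self hb)] at hy)
      _ = -∫ y in -b..b, f y := intervalIntegral.integral_neg
  have : IsAddTorsionFree E := .of_isTorsionFree ℝ E
  exact self_eq_neg.1 reflect

variable {f f' F : ℝ → ℝ} {b : ℝ}

lemma integral_deriv_mul_id_eq_zero_of_odd (hb : 0 ≤ b)
    (hf : ∀ y ∈ Icc (-b) b, HasDerivWithinAt f (f' y) (Icc (-b) b) y)
    (hf' : IntervalIntegrable f' volume (-b) b) (hodd : ∀ y ∈ Icc (-b) b, f (-y) = -f y) :
    ∫ s in -b..b, f' s * s = 0 := by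
  have hIcc : Icc (-b) b = uIcc (-b) b := (uIcc_of_le (neg_le_self hb)).symm
  have hfc : IntervalIntegrable f volume (-b) b :=
    ContinuousOn.intervalIntegrable fun y hy ↦ hIcc ▸ (hf y (hIcc ▸ hy)).continuousWithinAt
  have parts := integral_deriv_mul_eq_sub_of_hasDerivWithinAt (v := id) (v' := fun _ ↦ 1)
    (hIcc ▸ hf) (fun y _ ↦ (hasDerivAt_id y).hasDerivWithinAt) hf' intervalIntegrable_const
  simp only [mul_one] at parts
  rw [integral_add (hf'.mul_continuousOn continuousOn_id) hfc, integral_eq_zero_of_odd hb hodd,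
    hodd b (right_mem_Icc.2 (neg_le_self hb))] at parts
  simp only [id_eq] at parts
  linarith

lemma integral_eq_sub_two_mul_integral_sub_mul (hb : 0 ≤ b) (hf : ContinuousOn f (Icc 0 b))
    (hf' : ∀ y ∈ Ioo 0 b, HasDerivAt f (f' y) y) (hF : ContinuousOn F (Icc 0 b))
    (hF' : ∀ y ∈ Ioo 0 b, HasDerivAt F (f' y * y) y) :
    ∫ y in (0 : ℝ)..b, F y = b * F b - 2 * ∫ y in (0 : ℝ)..b, (f b - f y) * y := by
  have hF_int : IntervalIntegrable F volume 0 b := hF.intervalIntegrable_of_Icc hb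
  have hG_int : IntervalIntegrable (fun y ↦ 2 * ((f b - f y) * y)) volume 0 b :=
    ContinuousOn.intervalIntegrable_of_Icc hb (by fun_prop)
  have hasDerivAt_antideriv (y : ℝ) (hy : y ∈ Ioo 0 b) :
      HasDerivAt (fun y ↦ y ^ 2 * (f b - f y) + y * F y) (2 * ((f b - f y) * y) + F y) y := by
    refine (((hasDerivAt_pow 2 y).mul ((hf' y hy).const_sub (f b))).add
      ((hasDerivAt_id y).mul (hF' y hy))).congr_deriv ?_
    simp only [id_eq]
    ring
  have ftc := integral_eq_sub_of_hasDerivAt_of_le hb (by fun_prop) hasDerivAt_antideriv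
    (hG_int.add hF_int)
  rw [integral_add hG_int hF_int, intervalIntegral.integral_const_mul] at ftc
  linarith

end Calculus

/-- The function `F(y) = ∫_{-1}^y f'(s) s ds`, where `f'` is the derivative of the profile `f`. -/
noncomputable def weightedPrimitive (f' : ℝ → ℝ) (y : ℝ) : ℝ :=
  ∫ s in (-1 : ℝ)..y, f' s * s

/-- The functional `I₁(f) = ∫₀¹ F(y)² / (1 - f(y)²) dy`, where `f'` is the derivative of `f`. -/
noncomputable def ratioIntegral (f f' : ℝ → ℝ) : ℝ :=
  ∫ y in (0 : ℝ)..1, weightedPrimitive f' y ^ 2 / (1 - f y ^ 2)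

/-- The functional `I₂(f) = ∫₀¹ (1 - f(y)) y dy`. -/
noncomputable def deficitMoment (f : ℝ → ℝ) : ℝ :=
  ∫ y in (0 : ℝ)..1, (1 - f y) * y

/-- The functional `J̃(f, c)`, with `a` standing for `g A` and `f'` for the derivative of `f`. -/
noncomputable def profileEnergy (a : ℝ) (f f' : ℝ → ℝ) (c : ℝ) : ℝ :=
  1 / 2 * c ^ 3 * ratioIntegral f f' - 1 / 2 * c ^ 2 * a * deficitMoment f

section Energy

lemma weightedPrimitive_const_one (y : ℝ) : weightedPrimitive (fun _ ↦ 1) y = (y ^ 2 - 1) / 2 := by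
  simp [weightedPrimitive]

lemma ratioIntegral_id : ratioIntegral id (fun _ ↦ 1) = 1 / 6 := by
  have integrand (y : ℝ) : weightedPrimitive (fun _ ↦ 1) y ^ 2 / (1 - id y ^ 2) =
      1 / 4 * (1 - y ^ 2) := by
    rw [weightedPrimitive_const_one, id_eq]
    rcases eq_or_ne (1 - y ^ 2) 0 with h | h
    · rw [h, div_zero, mul_zero]
    · field_simp
      ring
  simp only [ratioIntegral, integrand]
  norm_num

lemma deficitMoment_id : deficitMoment id = 1 / 6 := by
  simp only [deficitMoment, id_eq, sub_mul, one_mul, ← sq]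
  rw [intervalIntegral.integral_sub (by simp) (by simp)]
  norm_num

lemma profileEnergy_id (a : ℝ) : profileEnergy a id (fun _ ↦ 1) (2 / 3 * a) = -a ^ 3 / 81 := by
  rw [profileEnergy, ratioIntegral_id, deficitMoment_id]
  ring

lemma profileEnergy_sub_eq (a : ℝ) (f f' : ℝ → ℝ) {c : ℝ} (hc : c ≠ 0) :
    profileEnergy a f f' c - -a ^ 3 / 81 =
      c ^ 3 / 2 * (ratioIntegral f f' - 3 / 2 * (2 * a / (3 * c)) * deficitMoment f -
        -(2 * a / (3 * c)) ^ 3 / 12) := by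
  rw [profileEnergy]
  field_simp
  ring

end Energy

/-- The class `𝓕` of admissible profiles `f` with derivative `f'`. The conditions at `-1` are
recorded through those at `1` and oddness. -/
structure IsProfile (f f' : ℝ → ℝ) : Prop where
  hasDerivWithinAt : ∀ y ∈ Icc (-1 : ℝ) 1, HasDerivWithinAt f (f' y) (Icc (-1) 1) y
  continuousOn_deriv : ContinuousOn f' (Icc (-1) 1)
  map_one : f 1 = 1
  deriv_one_pos : 0 < f' 1
  mem_Ioo : ∀ y ∈ Ioo (-1 : ℝ) 1, f y ∈ Ioo (-1 : ℝ) 1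
  odd : ∀ y ∈ Icc (-1 : ℝ) 1, f (-y) = -f y

namespace IsProfile

variable {f f' : ℝ → ℝ} {t a c : ℝ}

lemma continuousOn (hf : IsProfile f f') : ContinuousOn f (Icc (-1) 1) :=
  fun y hy ↦ (hf.hasDerivWithinAt y hy).continuousWithinAt

lemma continuousOn_Icc_zero_one (hf : IsProfile f f') : ContinuousOn f (Icc 0 1) :=
  hf.continuousOn.mono (Icc_subset_Icc_left (by norm_num))

lemma le_one (hf : IsProfile f f') {y : ℝ} (hy : y ∈ Icc (0 : ℝ) 1) : f y ≤ 1 := by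
  rcases hy.2.eq_or_lt with rfl | hy1
  · exact hf.map_one.le
  · exact (hf.mem_Ioo y ⟨by linarith [hy.1], hy1⟩).2.le

lemma one_sub_sq_pos (hf : IsProfile f f') {y : ℝ} (hy : y ∈ Ioo (-1 : ℝ) 1) : 0 < 1 - f y ^ 2 :=
  sub_pos.2 <| (sq_lt_one_iff_abs_lt_one _).2 <| abs_lt.2 (hf.mem_Ioo y hy)

lemma hasDerivWithinAt_weightedPrimitive (hf : IsProfile f f') {y : ℝ} (hy : y ∈ Icc (-1 : ℝ) 1) :
    HasDerivWithinAt (weightedPrimitive f') (f' y * y) (Icc (-1) 1) y :=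
  hasDerivWithinAt_integral_of_continuousOn_Icc (hf.continuousOn_deriv.mul continuousOn_id) hy

lemma continuousOn_weightedPrimitive (hf : IsProfile f f') :
    ContinuousOn (weightedPrimitive f') (Icc (-1) 1) :=
  fun _ hy ↦ (hf.hasDerivWithinAt_weightedPrimitive hy).continuousWithinAt

lemma weightedPrimitive_one (hf : IsProfile f f') : weightedPrimitive f' 1 = 0 :=
  integral_deriv_mul_id_eq_zero_of_odd zero_le_one hf.hasDerivWithinAt
    (hf.continuousOn_deriv.intervalIntegrable_of_Icc (by norm_num)) hf.odd

lemma integral_weightedPrimitive (hf : IsProfile f f') :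
    ∫ y in (0 : ℝ)..1, weightedPrimitive f' y = -2 * deficitMoment f := by
  have interior {y : ℝ} (hy : y ∈ Ioo (0 : ℝ) 1) : Icc (-1) 1 ∈ 𝓝 y :=
    Icc_mem_nhds (by linarith [hy.1]) hy.2
  have parts := integral_eq_sub_two_mul_integral_sub_mul zero_le_one hf.continuousOn_Icc_zero_one
    (fun y hy ↦ (hf.hasDerivWithinAt y (mem_of_mem_nhds (interior hy))).hasDerivAt (interior hy))
    (hf.continuousOn_weightedPrimitive.mono (Icc_subset_Icc_left (by norm_num)))
    (fun y hy ↦ (hf.hasDerivWithinAt_weightedPrimitive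
      (mem_of_mem_nhds (interior hy))).hasDerivAt (interior hy))
  rw [hf.map_one, hf.weightedPrimitive_one] at parts
  rw [parts, deficitMoment]
  ring

lemma continuousOn_sq_weightedPrimitive_div (hf : IsProfile f f') :
    ContinuousOn (fun y ↦ weightedPrimitive f' y ^ 2 / (1 - f y ^ 2)) (Ioc (-1) 1) := by
  intro y hy
  have hy' := Ioc_subset_Icc_self hy
  refine ContinuousWithinAt.mono ?_ Ioc_subset_Icc_self
  rcases hy.2.eq_or_lt with rfl | hy1
  · have denominator := ((hf.hasDerivWithinAt 1 hy').pow 2).const_sub 1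
    refine continuousWithinAt_sq_div_of_hasDerivWithinAt (hf.hasDerivWithinAt_weightedPrimitive hy')
      denominator hf.weightedPrimitive_one ?_ ?_
    · simp [hf.map_one]
    · simp [hf.map_one, hf.deriv_one_pos.ne']
  · exact ((hf.continuousOn_weightedPrimitive y hy').pow 2).div
      (continuousWithinAt_const.sub ((hf.continuousOn y hy').pow 2))
      (hf.one_sub_sq_pos ⟨hy.1, hy1⟩).ne'

lemma mul_integral_le_ratioIntegral_sub (hf : IsProfile f f') (t : ℝ) :
    t / 2 * (∫ y in (0 : ℝ)..1, ((1 - f y) * y - t / 2 * (1 - f y ^ 2))) ≤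
      ratioIntegral f f' - 3 / 2 * t * deficitMoment f := by
  have hfc := hf.continuousOn_Icc_zero_one
  have integrable {φ : ℝ → ℝ} (hφ : ContinuousOn φ (Icc 0 1)) : IntervalIntegrable φ volume 0 1 :=
    hφ.intervalIntegrable_of_Icc zero_le_one
  have hw := integrable (φ := fun y ↦ 1 - f y ^ 2) (by fun_prop)
  have young := two_mul_integral_sub_integral_le_integral_sq_div zero_le_one
    (fun y hy ↦ hf.one_sub_sq_pos ⟨by linarith [hy.1], hy.2⟩)
    (integrable (hf.continuousOn_weightedPrimitive.mono (Icc_subset_Icc_left (by norm_num)))) hw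
    (integrable (hf.continuousOn_sq_weightedPrimitive_div.mono
      fun y hy ↦ ⟨by linarith [hy.1], hy.2⟩)) (-(t / 2))
  rw [hf.integral_weightedPrimitive] at young
  rw [integral_sub (integrable (by fun_prop)) (hw.const_mul _),
    intervalIntegral.integral_const_mul, ratioIntegral, deficitMoment]
  rw [deficitMoment] at young
  linarith

lemma neg_cube_div_twelve_le_ratioIntegral_sub (hf : IsProfile f f') (ht : 0 < t) :
    -t ^ 3 / 12 ≤ ratioIntegral f f' - 3 / 2 * t * deficitMoment f :=
  calc -t ^ 3 / 12
    _ = t / 2 * (-t ^ 2 / 6) := by ring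
    _ ≤ t / 2 * ∫ y in (0 : ℝ)..1, ((1 - f y) * y - t / 2 * (1 - f y ^ 2)) := by
        gcongr
        exact neg_sq_div_six_le_integral ht zero_le_one hf.continuousOn_Icc_zero_one
          fun _ ↦ hf.le_one
    _ ≤ ratioIntegral f f' - 3 / 2 * t * deficitMoment f := hf.mul_integral_le_ratioIntegral_sub t

lemma eq_one_of_eq_min_div (hf : IsProfile f f') (ht : 0 < t)
    (h : ∀ y ∈ Icc (0 : ℝ) 1, f y = min (y / t) 1) : t = 1 := by
  have t_le_one : t ≤ 1 := by
    have h1 := h 1 (right_mem_Icc.2 zero_le_one)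
    rw [hf.map_one] at h1
    exact (one_le_div ht).1 (right_eq_inf.1 h1)
  by_contra hne
  have t_lt_one := t_le_one.lt_of_ne hne
  have ft : f t = 1 := by simpa [ht.ne'] using h t ⟨ht.le, t_le_one⟩
  exact (hf.mem_Ioo t ⟨by linarith, t_lt_one⟩).2.ne ft

lemma eq_one_and_eq_id_of_ratioIntegral_sub_eq (hf : IsProfile f f') (ht : 0 < t)
    (h : ratioIntegral f f' - 3 / 2 * t * deficitMoment f = -t ^ 3 / 12) :
    t = 1 ∧ ∀ y ∈ Icc (-1 : ℝ) 1, f y = y := by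
  have hfc := hf.continuousOn_Icc_zero_one
  have hmin : ∀ y ∈ Icc (0 : ℝ) 1, f y = min (y / t) 1 := by
    refine eq_min_div_of_integral_eq ht zero_lt_one hfc (fun _ ↦ hf.le_one) (le_antisymm ?_ ?_)
    · refine le_of_mul_le_mul_left ?_ (half_pos ht)
      linarith [hf.mul_integral_le_ratioIntegral_sub t]
    · exact neg_sq_div_six_le_integral ht zero_le_one hfc fun _ ↦ hf.le_one
  obtain rfl := hf.eq_one_of_eq_min_div ht hmin
  have eq_id (y : ℝ) (hy : y ∈ Icc (0 : ℝ) 1) : f y = y := by simpa [hy.2] using hmin y hy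
  refine ⟨rfl, fun y hy ↦ ?_⟩
  rcases le_total 0 y with hy0 | hy0
  · exact eq_id y ⟨hy0, hy.2⟩
  · have := eq_id (-y) ⟨neg_nonneg.2 hy0, neg_le.1 hy.1⟩
    linarith [hf.odd y hy]

theorem neg_cube_div_le_profileEnergy (hf : IsProfile f f') (ha : 0 < a) (hc : 0 ≤ c) :
    -a ^ 3 / 81 ≤ profileEnergy a f f' c := by
  rcases hc.eq_or_lt with rfl | hc
  · have := pow_pos ha 3
    simp only [profileEnergy]
    linarith
  · rw [← sub_nonneg, profileEnergy_sub_eq a f f' hc.ne']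
    have := sub_nonneg.2 <|
      hf.neg_cube_div_twelve_le_ratioIntegral_sub (t := 2 * a / (3 * c)) (by positivity)
    positivity

theorem eq_id_and_eq_of_profileEnergy_eq (hf : IsProfile f f') (ha : 0 < a) (hc : 0 ≤ c)
    (h : profileEnergy a f f' c = -a ^ 3 / 81) :
    (∀ y ∈ Icc (-1 : ℝ) 1, f y = y) ∧ c = 2 / 3 * a := by
  rcases hc.eq_or_lt with rfl | hc
  · have := pow_pos ha 3
    simp only [profileEnergy] at h
    linarith
  · rw [← sub_eq_zero, profileEnergy_sub_eq a f f' hc.ne', mul_eq_zero_iff_left (by positivity),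
      sub_eq_zero] at h
    obtain ⟨ht, eq_id⟩ := hf.eq_one_and_eq_id_of_ratioIntegral_sub_eq (by positivity) h
    refine ⟨eq_id, ?_⟩
    rw [div_eq_one_iff_eq (by positivity)] at ht
    linarith

end IsProfile

theorem stmt_12 (g A : ℝ) (hg : 0 < g) (hA : 0 < A) :
    (1 / 2 * (2 / 3 * g * A) ^ 3 *
          (∫ y in (0 : ℝ)..1, (∫ s in (-1 : ℝ)..y, (1 : ℝ) * s) ^ 2 / (1 - y ^ 2)) -
        1 / 2 * (2 / 3 * g * A) ^ 2 * (g * A) * (∫ y in (0 : ℝ)..1, (1 - y) * y) =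
      -(g ^ 3 * A ^ 3) / 81) ∧
    ∀ f f' : ℝ → ℝ,
      (∀ y ∈ Set.Icc (-1 : ℝ) 1, HasDerivWithinAt f (f' y) (Set.Icc (-1 : ℝ) 1) y) →
      ContinuousOn f' (Set.Icc (-1 : ℝ) 1) →
      f 1 = 1 → f (-1) = -1 → 0 < f' 1 → 0 < f' (-1) →
      (∀ y ∈ Set.Ioo (-1 : ℝ) 1, f y ∈ Set.Ioo (-1 : ℝ) 1) →
      (∀ y ∈ Set.Icc (-1 : ℝ) 1, f (-y) = -f y) →
      ∀ c : ℝ, 0 ≤ c →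
        (-(g ^ 3 * A ^ 3) / 81 ≤
          1 / 2 * c ^ 3 * (∫ y in (0 : ℝ)..1, (∫ s in (-1 : ℝ)..y, f' s * s) ^ 2 / (1 - (f y) ^ 2)) -
            1 / 2 * c ^ 2 * (g * A) * (∫ y in (0 : ℝ)..1, (1 - f y) * y)) ∧
        (1 / 2 * c ^ 3 * (∫ y in (0 : ℝ)..1, (∫ s in (-1 : ℝ)..y, f' s * s) ^ 2 / (1 - (f y) ^ 2)) -
            1 / 2 * c ^ 2 * (g * A) * (∫ y in (0 : ℝ)..1, (1 - f y) * y) =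
            -(g ^ 3 * A ^ 3) / 81 →
          (∀ y ∈ Set.Icc (-1 : ℝ) 1, f y = y) ∧ c = 2 / 3 * g * A) := by
  have ha : 0 < g * A := mul_pos hg hA
  have value : -(g ^ 3 * A ^ 3) / 81 = -(g * A) ^ 3 / 81 := by rw [mul_pow]
  rw [value, mul_assoc (2 / 3) g A]
  refine ⟨profileEnergy_id (g * A), ?_⟩
  intro f f' hderiv hcont h1 _ hpos _ hmem hodd c hc
  have hf : IsProfile f f' := ⟨hderiv, hcont, h1, hpos, hmem, hodd⟩
  exact ⟨hf.neg_cube_div_le_profileEnergy ha hc, hf.eq_id_and_eq_of_profileEnergy_eq ha hc⟩
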